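/- arXiv:1201.0803 — 2 statements merged into one kernel-verified Lean document; each statement's English description precedes it below -/
import Mathlib

section
/- Suppose G is a primitive group of permutations of an infinite set Ω and α ∈ Ω. If the cardinalities of the orbits of the point stabilizer G_α on Ω are bounded above by a finite cardinal, then G_α is a finite group. -/
/-- A group `G` acts primitively on `Ω` if it acts transitively and the only
`G`-invariant equivalence relations on `Ω` are the universal and the trivial ones. -/
def IsPrimitive (G Ω : Type*) [Group G] [MulAction G Ω] : Prop :=
  MulAction.IsPretransitive G Ω ∧
    ∀ r : Ω → Ω → Prop, Equivalence r →
      (∀ (g : G) (x y : Ω), r x y → r (g • x) (g • y)) →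
      (∀ x y : Ω, r x y) ∨ (∀ x y : Ω, r x y → x = y)

section Helpers

variable {G Ω : Type*} [Group G] [MulAction G Ω]

/-- The orbit of `l` under the pointwise stabilizer of `A`. -/
def fixOrb (G : Type*) {Ω : Type*} [Group G] [MulAction G Ω] (A : Set Ω) (l : Ω) : Set Ω :=
  {y | ∃ g : G, (∀ a ∈ A, g • a = a) ∧ g • l = y}

/-- `A` is finite and its pointwise stabilizer has all orbits of size at most `m`. -/
def StrongSet (G : Type*) {Ω : Type*} [Group G] [MulAction G Ω] (m : ℕ) (A : Set Ω) : Prop :=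
  A.Finite ∧ ∀ l : Ω, (fixOrb G A l).encard ≤ m

/-- The group generated by the pointwise stabilizers of the strong subsets of `A`. -/
def genBy (G : Type*) {Ω : Type*} [Group G] [MulAction G Ω] (m : ℕ) (A : Set Ω) : Subgroup G :=
  Subgroup.closure {g | ∃ B, B ⊆ A ∧ StrongSet G m B ∧ ∀ b ∈ B, g • b = b}

lemma fixOrb_anti {A B : Set Ω} (h : A ⊆ B) (l : Ω) : fixOrb G B l ⊆ fixOrb G A l := by
  rintro y ⟨g, hg, rfl⟩
  exact ⟨g, fun a ha => hg a (h ha), rfl⟩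

lemma mem_fixOrb_self (A : Set Ω) (l : Ω) : l ∈ fixOrb G A l :=
  ⟨1, fun a _ => one_smul _ a, one_smul _ l⟩

lemma fixOrb_smul_mem {A : Set Ω} {l y : Ω} {g : G} (hg : ∀ a ∈ A, g • a = a)
    (hy : y ∈ fixOrb G A l) : g • y ∈ fixOrb G A l := by
  obtain ⟨k, hk, rfl⟩ := hy
  exact ⟨g * k, fun a ha => by rw [mul_smul, hk a ha, hg a ha], mul_smul _ _ _⟩

lemma fixOrb_image (A : Set Ω) (l : Ω) (h : G) :
    fixOrb G ((fun x => h • x) '' A) l ⊆ (fun x => h • x) '' fixOrb G A (h⁻¹ • l) := by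
  rintro y ⟨g, hg, rfl⟩
  refine ⟨h⁻¹ • g • l, ⟨h⁻¹ * g * h, ?_, ?_⟩, ?_⟩
  · intro a ha
    have := hg (h • a) ⟨a, ha, rfl⟩
    rw [mul_smul, mul_smul, this, inv_smul_smul]
  · simp [mul_smul]
  · simp

lemma StrongSet.superset {m : ℕ} {A B : Set Ω} (hA : StrongSet G m A) (hB : B.Finite)
    (h : A ⊆ B) : StrongSet G m B :=
  ⟨hB, fun l => (Set.encard_le_encard (fixOrb_anti h l)).trans (hA.2 l)⟩

lemma StrongSet.image {m : ℕ} {A : Set Ω} (hA : StrongSet G m A) (h : G) :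
    StrongSet G m ((fun x => h • x) '' A) :=
  ⟨hA.1.image _, fun l => (Set.encard_le_encard (fixOrb_image A l h)).trans
    ((Set.encard_image_le _ _).trans (hA.2 _))⟩

lemma genBy_mono {m : ℕ} {A B : Set Ω} (h : A ⊆ B) : genBy G m A ≤ genBy G m B := by
  apply Subgroup.closure_mono
  rintro g ⟨C, hC, h1, h2⟩
  exact ⟨C, hC.trans h, h1, h2⟩

lemma genBy_conj {m : ℕ} {A : Set Ω} (h : G) {g : G} (hg : g ∈ genBy G m A) :
    h * g * h⁻¹ ∈ genBy G m ((fun x => h • x) '' A) := by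
  have : genBy G m A ≤ (genBy G m ((fun x => h • x) '' A)).comap (MulAut.conj h).toMonoidHom := by
    unfold genBy
    rw [Subgroup.closure_le]
    rintro g ⟨C, hC, h1, h2⟩
    refine Subgroup.subset_closure ⟨(fun x => h • x) '' C, Set.image_mono hC, h1.image h, ?_⟩
    rintro _ ⟨c, hc, rfl⟩
    simp [mul_smul, h2 c hc]
  exact this hg

/-- Key step: with `m` minimal, every element of `genBy A` moves `l` inside the orbit. -/
lemma genBy_key {m : ℕ} (hmin : ∀ k, k < m → ∀ A : Set Ω, ¬ StrongSet G k A)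
    [Nonempty Ω] {A : Set Ω} (hA : StrongSet G m A) :
    ∃ l : Ω, ∀ A0, A0 ⊆ A → StrongSet G m A0 → ∀ g ∈ genBy G m A, g • l ∈ fixOrb G A0 l := by
  have hm : m ≠ 0 := by
    rintro rfl
    obtain ⟨x⟩ := ‹Nonempty Ω›
    have h := hA.2 x
    simp only [Nat.cast_zero, nonpos_iff_eq_zero, Set.encard_eq_zero] at h
    have := mem_fixOrb_self (G := G) A x
    rw [h] at this
    exact this
  obtain ⟨l, hl⟩ : ∃ l, (m : ℕ∞) ≤ (fixOrb G A l).encard := by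
    by_contra! hcon
    refine hmin (m - 1) (by omega) A ⟨hA.1, fun l => ?_⟩
    have h1 := hcon l
    obtain ⟨k, hk⟩ := ENat.ne_top_iff_exists.1 (ne_top_of_lt h1)
    rw [← hk] at h1 ⊢
    norm_cast at h1 ⊢
    omega
  have heq : ∀ B, B ⊆ A → StrongSet G m B → fixOrb G A l = fixOrb G B l := by
    intro B hB hS
    have hfin : (fixOrb G A l).Finite :=
      Set.finite_of_encard_le_coe (hA.2 l)
    exact hfin.eq_of_subset_of_encard_le (fixOrb_anti hB l) ((hS.2 l).trans hl)
  refine ⟨l, fun A0 h0 hS0 g hg => ?_⟩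
  rw [← heq A0 h0 hS0]
  have key : ∀ y, (y ∈ fixOrb G A l ↔ g • y ∈ fixOrb G A l) := by
    unfold genBy at hg
    induction hg using Subgroup.closure_induction with
    | mem g hg =>
      obtain ⟨B, hB, hS, hf⟩ := hg
      intro y
      rw [heq B hB hS]
      refine ⟨fixOrb_smul_mem hf, fun h => ?_⟩
      have := fixOrb_smul_mem (g := g⁻¹) (fun b hb => by rw [inv_smul_eq_iff, hf b hb]) h
      simpa using this
    | one => simp
    | mul a b _ _ ha hb => intro y; rw [mul_smul, ← ha, ← hb]
    | inv a _ ha => intro y; rw [ha (a⁻¹ • y)]; simp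
  exact (key l).1 (mem_fixOrb_self A l)

lemma encard_biUnion_le {ι β : Type*} {n k : ℕ} (s : Set ι) (hs : s.encard ≤ k) (f : ι → Set β)
    (hf : ∀ i, (f i).encard ≤ n) : (⋃ i ∈ s, f i).encard ≤ (k * n : ℕ) := by
  classical
  have hfin : s.Finite := Set.finite_of_encard_le_coe hs
  have hff : ∀ i, (f i).Finite := fun i => Set.finite_of_encard_le_coe (hf i)
  have : (⋃ i ∈ s, f i) = ((hfin.toFinset.biUnion fun i => (hff i).toFinset : Finset β) : Set β) := by
    ext; simp
  rw [this, Set.encard_coe_eq_coe_finsetCard]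
  norm_cast
  refine (Finset.card_biUnion_le_card_mul _ _ n ?_).trans ?_
  · intro i _
    have := hf i
    rw [(hff i).encard_eq_coe_toFinset_card] at this
    exact_mod_cast this
  · rw [hfin.encard_eq_coe_toFinset_card] at hs
    exact Nat.mul_le_mul_right _ (by exact_mod_cast hs)

end Helpers

/-- If `G` is a primitive group of permutations of an infinite set `Ω`, `α ∈ Ω`,
and the cardinalities of the orbits of the point stabilizer `G_α` on `Ω` are
bounded above by a finite cardinal, then `G_α` is finite. -/
theorem stabilizer_finite_of_bounded_suborbits {G Ω : Type*} [Group G] [MulAction G Ω]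
    [FaithfulSMul G Ω] [Infinite Ω]
    (hprim : IsPrimitive G Ω) (α : Ω)
    (h : ∃ n : ℕ, ∀ β : Ω,
      Cardinal.mk (MulAction.orbit (MulAction.stabilizer G α) β) ≤ (n : Cardinal)) :
    Finite (MulAction.stabilizer G α) := by
  classical
  obtain ⟨n, hn⟩ := h
  obtain ⟨htr, hpr⟩ := hprim
  have hαn : StrongSet G n ({α} : Set Ω) := by
    refine ⟨Set.finite_singleton _, fun l => ?_⟩
    have h1 : fixOrb G {α} l ⊆ MulAction.orbit (MulAction.stabilizer G α) l := by
      rintro y ⟨g, hg, rfl⟩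
      exact ⟨⟨g, hg α rfl⟩, rfl⟩
    refine (Set.encard_le_encard h1).trans ?_
    have h2 := hn l
    have : Finite (MulAction.orbit (MulAction.stabilizer G α) l) :=
      Cardinal.lt_aleph0_iff_finite.1 (h2.trans_lt (Cardinal.natCast_lt_aleph0))
    have h3 : (MulAction.orbit (MulAction.stabilizer G α) l).Finite := this
    rw [← h3.cast_ncard_eq]
    rw [← Set.cast_ncard h3] at h2
    exact_mod_cast h2
  have hpt : ∀ l : Ω, StrongSet G n ({l} : Set Ω) := by
    intro l
    obtain ⟨g, rfl⟩ := MulAction.exists_smul_eq G α l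
    simpa using hαn.image g
  have hex : ∃ m : ℕ, ∃ A : Set Ω, StrongSet G m A := ⟨n, _, hαn⟩
  obtain ⟨m, ⟨A0, hA0⟩, hmin⟩ : ∃ m : ℕ, (∃ A : Set Ω, StrongSet G m A) ∧
      ∀ k, k < m → ∀ A : Set Ω, ¬ StrongSet G k A :=
    ⟨Nat.find hex, Nat.find_spec hex, fun k hk A hA => Nat.find_min hex hk ⟨A, hA⟩⟩
  -- orbits of `genBy A` are uniformly bounded
  have hbound : ∀ A : Set Ω, A.Finite → A0 ⊆ A →
      {y | ∃ g ∈ genBy G m A, g • α = y}.encard ≤ (m * n : ℕ) := by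
    intro A hA h0
    obtain ⟨l, hl⟩ := genBy_key hmin (hA0.superset hA h0)
    refine (Set.encard_le_encard ?_).trans
      (encard_biUnion_le (fixOrb G A0 α) (hA0.2 α) (fun b => fixOrb G {l} b) (hpt l).2)
    rintro y ⟨g, hg, rfl⟩
    obtain ⟨k, hk, hkl⟩ := hl A0 h0 hA0 g⁻¹ (inv_mem hg)
    simp only [Set.mem_iUnion]
    refine ⟨k⁻¹ • α, ⟨k⁻¹, fun a ha => by rw [inv_smul_eq_iff, hk a ha], rfl⟩, g * k, ?_, ?_⟩
    · rintro a rfl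
      rw [mul_smul, hkl, smul_inv_smul]
    · simp [mul_smul]
  have heqv : Equivalence (fun x y : Ω => ∃ A : Set Ω, A.Finite ∧ ∃ g ∈ genBy G m A, g • x = y) := by
    refine ⟨fun x => ⟨∅, Set.finite_empty, 1, one_mem _, one_smul _ _⟩, ?_, ?_⟩
    · rintro x y ⟨A, hA, g, hg, rfl⟩
      exact ⟨A, hA, g⁻¹, inv_mem hg, inv_smul_smul _ _⟩
    · rintro x y z ⟨A, hA, g, hg, rfl⟩ ⟨B, hB, k, hk, rfl⟩
      exact ⟨A ∪ B, hA.union hB, k * g, mul_mem (genBy_mono Set.subset_union_right hk)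
        (genBy_mono Set.subset_union_left hg), mul_smul _ _ _⟩
  have hinv : ∀ (k : G) (x y : Ω), (∃ A : Set Ω, A.Finite ∧ ∃ g ∈ genBy G m A, g • x = y) →
      ∃ A : Set Ω, A.Finite ∧ ∃ g ∈ genBy G m A, g • k • x = k • y := by
    rintro k x y ⟨A, hA, g, hg, rfl⟩
    exact ⟨_, hA.image _, _, genBy_conj k hg, by simp [mul_smul]⟩
  rcases hpr _ heqv hinv with hu | ht
  · -- universal relation: `Ω` would be finite
    exfalso
    choose A hAf g hg hgy using hu α
    obtain ⟨T, hT⟩ := Infinite.exists_subset_card_eq Ω (m * n + 1)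
    have hfin : (A0 ∪ ⋃ t ∈ T, A t).Finite :=
      hA0.1.union (T.finite_toSet.biUnion fun t _ => hAf t)
    have h1 := hbound _ hfin Set.subset_union_left
    have h2 : (T : Set Ω) ⊆ {y | ∃ g ∈ genBy G m (A0 ∪ ⋃ t ∈ T, A t), g • α = y} := by
      intro t ht
      refine ⟨g t, genBy_mono ?_ (hg t), hgy t⟩
      exact (Set.subset_biUnion_of_mem (u := A) (s := (T : Set Ω)) ht).trans Set.subset_union_right
    have h3 := (Set.encard_le_encard h2).trans h1
    rw [Set.encard_coe_eq_coe_finsetCard, hT] at h3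
    norm_cast at h3
    omega
  · -- trivial relation
    have htriv : ∀ g : G, (∀ a ∈ A0, g • a = a) → g = 1 := by
      intro g hg
      apply FaithfulSMul.eq_of_smul_eq_smul (α := Ω)
      intro x
      rw [one_smul]
      exact (ht x (g • x) ⟨A0, hA0.1, g,
        Subgroup.subset_closure ⟨A0, subset_rfl, hA0, hg⟩, rfl⟩).symm
    have : Finite A0 := hA0.1
    have hO : ∀ a : A0, Finite (fixOrb G {α} (a : Ω)) := fun a =>
      Set.finite_of_encard_le_coe (hαn.2 a)
    let F : MulAction.stabilizer G α → (∀ a : A0, fixOrb G {α} (a : Ω)) := fun g a =>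
      ⟨(g : G) • (a : Ω), (g : G), by rintro b rfl; exact g.2, rfl⟩
    refine Finite.of_injective F ?_
    intro g k hgk
    have h1 : (g : G)⁻¹ * (k : G) = 1 := by
      apply htriv
      intro a ha
      have := congrArg Subtype.val (congrFun hgk ⟨a, ha⟩)
      simp only [F] at this
      rw [mul_smul, ← this, inv_smul_smul]
    exact Subtype.ext (inv_mul_eq_one.1 h1)
end

section
/- Let G be a group acting primitively on an infinite set Ω. If the subdegrees of G are bounded above by a finite cardinal, then Ω is countably infinite. -/
theorem countable_nbrs {G Ω : Type*} [Group G] [MulAction G Ω]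
    (h : ∀ α β : Ω, (MulAction.orbit (MulAction.stabilizer G α) β).Countable) (a b x : Ω) :
    {y : Ω | ∃ g : G, g • a = x ∧ g • b = y}.Countable := by
  by_cases hx : ∃ g : G, g • a = x
  · obtain ⟨g, hg⟩ := hx
    refine (h x (g • b)).mono ?_
    rintro y ⟨k, hk, rfl⟩
    refine ⟨⟨k * g⁻¹, ?_⟩, ?_⟩
    · rw [MulAction.mem_stabilizer_iff]
      nth_rewrite 1 [← hg]
      rw [smul_smul, inv_mul_cancel_right, hk]
    · change (k * g⁻¹) • g • b = k • b
      rw [smul_smul, inv_mul_cancel_right]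
  · convert Set.countable_empty
    ext y
    simp only [Set.mem_ofPred_eq, Set.mem_empty_iff_false, iff_false]
    rintro ⟨g, hg, _⟩
    exact hx ⟨g, hg⟩

/-- If `G` acts primitively on an infinite set `Ω` and the subdegrees of `G` are
bounded above by a finite cardinal, then `Ω` is countably infinite. -/
theorem countably_infinite_of_bounded_subdegrees {G Ω : Type*} [Group G] [MulAction G Ω]
    [FaithfulSMul G Ω] [Infinite Ω]
    (hprim : IsPrimitive G Ω)
    (h : ∃ n : ℕ, ∀ α β : Ω,
      Cardinal.mk (MulAction.orbit (MulAction.stabilizer G α) β) ≤ (n : Cardinal)) :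
    Cardinal.mk Ω = Cardinal.aleph0 := by
  obtain ⟨n, hn⟩ := h
  have hc : ∀ α β : Ω, (MulAction.orbit (MulAction.stabilizer G α) β).Countable := fun α β =>
    Cardinal.le_aleph0_iff_set_countable.1 ((hn α β).trans (Cardinal.natCast_le_aleph0))
  obtain ⟨a, b, hab⟩ := exists_pair_ne Ω
  let E : Ω → Ω → Prop := fun x y => ∃ g : G, g • a = x ∧ g • b = y
  let N : Ω → Set Ω := fun x => {y | E x y} ∪ {y | E y x}
  have hN : ∀ x, (N x).Countable := fun x => by
    refine (countable_nbrs hc a b x).union ((countable_nbrs hc b a x).mono ?_)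
    rintro y ⟨g, h1, h2⟩
    exact ⟨g, h2, h1⟩
  let S : ℕ → Set Ω := fun k => Nat.rec {a} (fun _ s => ⋃ x ∈ s, N x) k
  have hS : ∀ k, (S k).Countable := fun k => by
    induction k with
    | zero => exact Set.countable_singleton a
    | succ k ih => exact ih.biUnion fun x _ => hN x
  have hstep : ∀ x y, y ∈ N x → x ∈ ⋃ k, S k → y ∈ ⋃ k, S k := fun x y hy hx => by
    obtain ⟨k, hk⟩ := Set.mem_iUnion.1 hx
    exact Set.mem_iUnion.2 ⟨k + 1, Set.mem_biUnion hk hy⟩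
  have hinv : ∀ x y, Relation.EqvGen E x y → (x ∈ ⋃ k, S k ↔ y ∈ ⋃ k, S k) := fun x y hxy => by
    induction hxy with
    | rel x y hxy => exact ⟨hstep x y (Or.inl hxy), hstep y x (Or.inr hxy)⟩
    | refl x => exact Iff.rfl
    | symm x y _ ih => exact ih.symm
    | trans x y z _ _ ih1 ih2 => exact ih1.trans ih2
  have hG : ∀ (g : G) (x y : Ω), Relation.EqvGen E x y → Relation.EqvGen E (g • x) (g • y) :=
    fun g x y hxy => by
    induction hxy with
    | rel x y hxy =>
      obtain ⟨k, rfl, rfl⟩ := hxy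
      exact .rel _ _ ⟨g * k, mul_smul _ _ _, mul_smul _ _ _⟩
    | refl x => exact .refl _
    | symm x y _ ih => exact ih.symm
    | trans x y z _ _ ih1 ih2 => exact ih1.trans _ _ _ ih2
  rcases hprim.2 _ (Relation.EqvGen.is_equivalence E) hG with hall | htriv
  · have hU : (Set.univ : Set Ω).Countable :=
      (Set.countable_iUnion hS).mono fun y _ =>
        (hinv a y (hall a y)).1 (Set.mem_iUnion.2 ⟨0, rfl⟩)
    haveI : Countable Ω := Set.countable_univ_iff.1 hU
    exact Cardinal.mk_eq_aleph0 Ω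
  · exact absurd (htriv a b (.rel _ _ ⟨1, one_smul _ _, one_smul _ _⟩)) hab
end
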